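/- (Perfect privacy against a corrupted Bob.) For all p, q, s ∈ ZMod 2, the averaged four-qubit density operator (1/4) · Σ_{(m₃,μ) ∈ (ZMod 2)²} v v†, where v = |X; p+m₃⟩ ⊗ |Z; q⟩ ⊗ |Z; s⟩ ⊗ w_s(p·(q+s) + m₃·s + μ) with w₀(c) = |Z; c⟩ and w₁(c) = |Y; c⟩, equals (I₂/2) ⊗ |Z;q⟩⟨Z;q| ⊗ |Z;s⟩⟨Z;s| ⊗ (I₂/2). In particular this average is independent of p. -/

import Mathlib

open Matrix
open scoped BigOperators

noncomputable section

/-- `(-1)^c` as a complex number, for `c : ZMod 2`. -/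
def sgn (c : ZMod 2) : ℂ := if c = 0 then 1 else -1

/-- `|Z;c⟩ = e_c`, the eigenvector of Pauli `Z` with eigenvalue `(−1)^c`. -/
def ketZ (c : ZMod 2) : ZMod 2 → ℂ := fun d => if d = c then 1 else 0

/-- `|X;c⟩ = (e₀ + (−1)^c e₁)/√2`, the eigenvector of Pauli `X` with eigenvalue `(−1)^c`. -/
def ketX (c : ZMod 2) : ZMod 2 → ℂ :=
  fun d => (Real.sqrt 2 : ℂ)⁻¹ * (if d = 0 then 1 else sgn c)

/-- `|Y;c⟩ = (e₀ + (−1)^c·i·e₁)/√2`, the eigenvector of Pauli `Y` with eigenvalue `(−1)^c`. -/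
def ketY (c : ZMod 2) : ZMod 2 → ℂ :=
  fun d => (Real.sqrt 2 : ℂ)⁻¹ * (if d = 0 then 1 else sgn c * Complex.I)

/-- Tensor product of a family of single-qubit vectors. -/
def tensorVec {V : Type*} [Fintype V] (f : V → (ZMod 2 → ℂ)) : (V → ZMod 2) → ℂ :=
  fun x => ∏ i, f i (x i)

/-- Tensor (Kronecker) product of a family of single-qubit operators. -/
def tensorOp {V : Type*} [Fintype V] (f : V → Matrix (ZMod 2) (ZMod 2) ℂ) :
    Matrix (V → ZMod 2) (V → ZMod 2) ℂ :=
  fun x y => ∏ i, f i (x i) (y i)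

/-- The rank-one outer product `|ψ⟩⟨ψ| = v v†`. -/
def outer {α : Type*} (ψ : α → ℂ) : Matrix α α ℂ := fun x y => ψ x * star (ψ y)

/-!
The projector onto a product state is the tensor product of its one-qubit projectors, and this
tensor product is multilinear, so a pad that enters a single factor may be averaged inside that
factor. The pad `μ` enters only the last qubit: for each fixed `m₃`, translating by `μ` runs through
a whole orthonormal basis, whose projectors sum to the identity, so the correction
`p·(q+s) + m₃·s` is absorbed. After that `m₃` survives only in the first qubit, where the same
argument absorbs `p`.
-/

section PaddedSums

open Function

variable {R ι N : Type*} {M : ι → Type*} [CommSemiring R] [DecidableEq ι]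
  [∀ i, AddCommMonoid (M i)] [∀ i, Module R (M i)] [AddCommMonoid N] [Module R N]
  {G H : Type*} [AddGroup G] [Fintype G] [AddGroup H] [Fintype H]

theorem smul_sum_map_update_add (L : MultilinearMap R M N) (m : ∀ i, M i) (i : ι)
    (r : R) (A : G → M i) (a : G) :
    r • ∑ x, L (update m i (A (a + x))) = L (update m i (r • ∑ x, A x)) := by
  rw [L.map_update_smul, L.map_update_sum]
  exact congrArg (r • ·)
    (Equiv.sum_comp (Equiv.addLeft a) fun x => L (update m i (A x)))

theorem smul_sum_map_update_update_add (L : MultilinearMap R M N) (m : ∀ i, M i) {i j : ι}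
    (hij : i ≠ j) (r r' : R) (A : G → M i) (B : H → M j) (a : G) (b : G → H) :
    (r * r') • ∑ t : G × H,
        L (update (update m i (A (a + t.1))) j (B (b t.1 + t.2)))
      = L (update (update m i (r • ∑ x, A x)) j (r' • ∑ y, B y)) := by
  calc
    _ = r • ∑ x, r' • ∑ y,
          L (update (update m i (A (a + x))) j (B (b x + y))) := by
      rw [Fintype.sum_prod_type, mul_smul, Finset.smul_sum]
    _ = r • ∑ x, L (update (update m j (r' • ∑ y, B y)) i (A (a + x))) := by
      simp_rw [smul_sum_map_update_add L _ j r' B, update_comm hij]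
    _ = _ := by
      rw [smul_sum_map_update_add, update_comm hij]

end PaddedSums

section Tensor

open Function

variable {V : Type*} [Fintype V]

theorem outer_tensorVec (f : V → ZMod 2 → ℂ) :
    outer (tensorVec f) = tensorOp fun i => outer (f i) := by
  ext x y
  simp only [outer, tensorVec, tensorOp, star_prod, Finset.prod_mul_distrib]

/-- The tensor product of single-qubit operators, `tensorOp`, as a multilinear map of its
factors. -/
def tensorOpMultilinear (V : Type*) [Fintype V] :
    MultilinearMap ℂ (fun _ : V => Matrix (ZMod 2) (ZMod 2) ℂ)
      (Matrix (V → ZMod 2) (V → ZMod 2) ℂ) where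
  toFun := tensorOp
  map_update_add' f i A B := by
    ext x y
    exact ((MultilinearMap.mkPiAlgebra ℂ V ℂ).compLinearMap
      fun k => Matrix.entryLinearMap ℂ ℂ (x k) (y k)).map_update_add f i A B
  map_update_smul' f i c A := by
    ext x y
    exact ((MultilinearMap.mkPiAlgebra ℂ V ℂ).compLinearMap
      fun k => Matrix.entryLinearMap ℂ ℂ (x k) (y k)).map_update_smul f i c A

theorem smul_sum_outer_tensorVec_update_update_add [DecidableEq V]
    {G H : Type*} [AddGroup G] [Fintype G] [AddGroup H] [Fintype H]
    (f : V → ZMod 2 → ℂ) {i j : V} (hij : i ≠ j) (r r' : ℂ)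
    (e : G → ZMod 2 → ℂ) (e' : H → ZMod 2 → ℂ) (a : G) (b : G → H) :
    (r * r') • ∑ t : G × H,
        outer (tensorVec (update (update f i (e (a + t.1))) j (e' (b t.1 + t.2))))
      = tensorOp (update (update (outer ∘ f) i (r • ∑ x, outer (e x)))
          j (r' • ∑ y, outer (e' y))) := by
  simp only [outer_tensorVec, ← comp_def, comp_update]
  exact smul_sum_map_update_update_add (tensorOpMultilinear V) (outer ∘ f) hij r r'
    (outer ∘ e) (outer ∘ e') a b

end Tensor

section Completeness

theorem sum_outer_ketZ : ∑ c, outer (ketZ c) = 1 := by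
  ext x y
  simp [outer, ketZ, Matrix.sum_apply, Matrix.one_apply]

/-- The equatorial qubit state `(e₀ + (−1)^c·u·e₁)/√2` of phase `u`, meant for `‖u‖ = 1`; it is
`ketX` for `u = 1` and `ketY` for `u = i`. -/
def ketEquator (u : ℂ) (c : ZMod 2) : ZMod 2 → ℂ :=
  fun d => (Real.sqrt 2 : ℂ)⁻¹ * (if d = 0 then 1 else sgn c * u)

theorem sum_outer_ketEquator {u : ℂ} (hu : ‖u‖ = 1) :
    ∑ c, outer (ketEquator u c) = 1 := by
  have sqrt_two_inv_mul_self : (Real.sqrt 2 : ℂ)⁻¹ * (Real.sqrt 2 : ℂ)⁻¹ = 2⁻¹ := by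
    rw [← mul_inv, ← Complex.ofReal_mul, Real.mul_self_sqrt zero_le_two, Complex.ofReal_ofNat]
  have entry (c x y : ZMod 2) : outer (ketEquator u c) x y
      = 2⁻¹ * ((if x = 0 then 1 else sgn c * u) * star (if y = 0 then 1 else sgn c * u)) := by
    simp only [outer, ketEquator, star_mul', star_inv₀, Complex.star_def, Complex.conj_ofReal,
      ← sqrt_two_inv_mul_self]
    ring
  have mul_conj_self : u * starRingEnd ℂ u = 1 := by
    rw [Complex.mul_conj', hu, Complex.ofReal_one, one_pow]
  have eq_zero_or_one : ∀ d : ZMod 2, d = 0 ∨ d = 1 := by decide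
  have sum_zmod_two (f : ZMod 2 → ℂ) : ∑ c, f c = f 0 + f 1 := Fin.sum_univ_two f
  ext x y
  rw [Matrix.sum_apply, sum_zmod_two, entry, entry]
  rcases eq_zero_or_one x with rfl | rfl <;> rcases eq_zero_or_one y with rfl | rfl <;>
    norm_num [sgn, mul_conj_self]

theorem sum_outer_ketX : ∑ c, outer (ketX c) = 1 := by
  have ketX_eq : ketX = ketEquator 1 := by
    funext c d
    simp only [ketX, ketEquator, mul_one]
  rw [ketX_eq]
  exact sum_outer_ketEquator (by simp)

theorem sum_outer_ketY : ∑ c, outer (ketY c) = 1 :=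
  sum_outer_ketEquator (by simp)

end Completeness

/-- Perfect privacy against a corrupted Bob: averaging the pure state
`v = |X; p+m₃⟩ ⊗ |Z; q⟩ ⊗ |Z; s⟩ ⊗ w_s(p·(q+s) + m₃·s + μ)` (with `w₀ = |Z;·⟩`,
`w₁ = |Y;·⟩`) over the uniformly random pads `(m₃, μ)` yields
`(I₂/2) ⊗ |Z;q⟩⟨Z;q| ⊗ |Z;s⟩⟨Z;s| ⊗ (I₂/2)`; in particular the average is
independent of `p`. -/
theorem bob_privacy (p q s : ZMod 2) :
    (4 : ℂ)⁻¹ • ∑ t : ZMod 2 × ZMod 2,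
        outer (tensorVec ![ketX (p + t.1), ketZ q, ketZ s,
          (if s = 0 then ketZ else ketY) (p * (q + s) + t.1 * s + t.2)])
      = tensorOp ![(2 : ℂ)⁻¹ • 1, outer (ketZ q), outer (ketZ s), (2 : ℂ)⁻¹ • 1] := by
  set w := if s = 0 then ketZ else ketY with w_def
  have sum_outer_w : ∑ c, outer (w c) = 1 := by
    rw [w_def]
    split_ifs
    exacts [sum_outer_ketZ, sum_outer_ketY]
  have update_slots {α : Type} (a b c d z z' : α) :
      Function.update (Function.update ![z, b, c, z'] 0 a) 3 d = ![a, b, c, d] := by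
    ext i
    fin_cases i <;> rfl
  have average := smul_sum_outer_tensorVec_update_update_add ![0, ketZ q, ketZ s, 0]
    (i := 0) (j := 3) (by decide) 2⁻¹ 2⁻¹ ketX w p (fun m₃ => p * (q + s) + m₃ * s)
  have outer_comp : outer ∘ ![0, ketZ q, ketZ s, 0]
      = ![outer 0, outer (ketZ q), outer (ketZ s), outer 0] :=
    (FinVec.map_eq _ _).symm
  rw [outer_comp, ← mul_inv, show (2 : ℂ) * 2 = 4 by norm_num] at average
  simpa only [update_slots, sum_outer_ketX, sum_outer_w] using average
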